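/- arXiv:2405.15449 — 3 statements merged into one kernel-verified Lean document; each statement's English description precedes it below -/
import Mathlib

section
/- Let G be a finite simple graph with maximum degree Δ, and let ψ be a proper partial (Δ+1)-edge coloring of G whose set of colored edges is F ⊆ E(G). Then for any edge e ∈ E(G) \ F, there exists a proper partial (Δ+1)-edge coloring ψ' of G whose set of colored edges is F ∪ {e}. (Consequently any proper partial (Δ+1)-edge coloring can be extended one edge at a time to a full (Δ+1)-edge coloring.) -/
/-!
Fix a fan at `x`: distinct neighbors `y 0, …, y k` with `s(x, y 0)` uncolored and the color of
`s(x, y (i + 1))` missing at `y i`. If some color is missing at both `x` and `y k`, recoloring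
`s(x, y k)` with it frees the old color of that edge at `x`, where it is also missing at
`y (k - 1)`; repeating this down the fan ends by coloring `s(x, y 0)`.

Now take a fan that cannot be prolonged, a color `α` missing at `x` and a color `β` missing at
`y k`. Unless `β` is missing at `x`, the fan contains an edge `s(x, y (j + 1))` colored `β`, so `β`
is missing at both `y j` and `y k`. The components of the graph of edges colored `α` or `β` are
paths and cycles, and `x`, `y j`, `y k` each miss one of the two colors, so one of `y j`, `y k` is
not in the component of `x`. Swapping `α` and `β` on that component makes `β` missing at `x` and
keeps it missing at `y j` or `y k`, and the fan up to that vertex survives the swap.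
-/

/-- A proper partial edge coloring of `G`: every colored edge is an edge of `G`, and any two
distinct edges of `G` sharing an endpoint do not receive the same color. -/
def IsProperPartial {V : Type*} (G : SimpleGraph V) {C : Type*}
    (ψ : Sym2 V → Option C) : Prop :=
  (∀ e, ψ e ≠ none → e ∈ G.edgeSet) ∧
  ∀ e₁ ∈ G.edgeSet, ∀ e₂ ∈ G.edgeSet, e₁ ≠ e₂ → (∃ v, v ∈ e₁ ∧ v ∈ e₂) →
    ∀ c, ψ e₁ = some c → ψ e₂ ≠ some c

namespace Vizing

variable {V C : Type*} {G : SimpleGraph V} {ψ φ : Sym2 V → Option C} {u v w x : V} {c d α β : C}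

/-- The color `c` is missing at the vertex `v`: no edge at `v` has color `c`. -/
def IsMissing (ψ : Sym2 V → Option C) (v : V) (c : C) : Prop :=
  ∀ w, ψ s(v, w) ≠ some c

/-- The coloring can be modified so that exactly the edge `e` is added to the colored edges. The
edges colored before may change their colors. -/
def IsExtendableAt (G : SimpleGraph V) (ψ : Sym2 V → Option C) (e : Sym2 V) : Prop :=
  ∃ ψ' : Sym2 V → Option C, IsProperPartial G ψ' ∧ ∀ f, ψ' f ≠ none ↔ (ψ f ≠ none ∨ f = e)

theorem IsExtendableAt.of_eq_none_iff {e : Sym2 V} (h : IsExtendableAt G φ e)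
    (hφ : ∀ f, φ f = none ↔ ψ f = none) : IsExtendableAt G ψ e := by
  obtain ⟨ψ', hψ', hcolored⟩ := h
  exact ⟨ψ', hψ', fun f ↦ (hcolored f).trans (or_congr_left (hφ f).not)⟩

section Proper

theorem isProperPartial_iff :
    IsProperPartial G ψ ↔ (∀ v w c, ψ s(v, w) = some c → G.Adj v w) ∧
      ∀ v u w c, ψ s(v, u) = some c → ψ s(v, w) = some c → u = w := by
  constructor
  · rintro ⟨hedge, hproper⟩
    have hadj : ∀ v w c, ψ s(v, w) = some c → G.Adj v w := fun v w c h ↦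
      hedge s(v, w) (by simp [h])
    refine ⟨hadj, fun v u w c hu hw ↦ ?_⟩
    by_contra huw
    exact hproper _ (hadj v u c hu) _ (hadj v w c hw) (mt Sym2.congr_right.1 huw)
      ⟨v, Sym2.mem_mk_left .., Sym2.mem_mk_left ..⟩ c hu hw
  · rintro ⟨hadj, hunique⟩
    refine ⟨fun e he ↦ ?_, ?_⟩
    · obtain ⟨c, hc⟩ := Option.ne_none_iff_exists'.1 he
      induction e using Sym2.ind with
      | h v w => exact hadj v w c hc
    · rintro e₁ - e₂ - hne ⟨v, hv₁, hv₂⟩ c hc₁ hc₂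
      obtain ⟨u, rfl⟩ := Sym2.mem_iff_exists.1 hv₁
      obtain ⟨w, rfl⟩ := Sym2.mem_iff_exists.1 hv₂
      exact hne (Sym2.congr_right.2 (hunique v u w c hc₁ hc₂))

theorem _root_.IsProperPartial.adj (hψ : IsProperPartial G ψ) (h : ψ s(v, w) = some c) :
    G.Adj v w :=
  (isProperPartial_iff.1 hψ).1 v w c h

theorem _root_.IsProperPartial.eq_of_eq_some (hψ : IsProperPartial G ψ) (hu : ψ s(v, u) = some c)
    (hw : ψ s(v, w) = some c) : u = w :=
  (isProperPartial_iff.1 hψ).2 v u w c hu hw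

theorem _root_.IsProperPartial.exists_isMissing [Fintype (G.neighborSet v)]
    (hψ : IsProperPartial G ψ) (hv : G.degree v < Nat.card C) : ∃ c, IsMissing ψ v c := by
  by_contra! h
  simp only [IsMissing, not_forall, not_not] at h
  choose w hw using h
  have hinj : Function.Injective fun c ↦ (⟨w c, hψ.adj (hw c)⟩ : G.neighborSet v) := by
    intro c d hcd
    have hwcd : w c = w d := congrArg Subtype.val hcd
    exact Option.some_injective C ((hw c).symm.trans (hwcd ▸ hw d))
  refine hv.not_ge ?_
  simpa only [Nat.card_eq_fintype_card, G.card_neighborSet_eq_degree] using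
    Nat.card_le_card_of_injective _ hinj

end Proper

section Update

variable [DecidableEq V] {e : Sym2 V} {o : Option C}

theorem _root_.IsProperPartial.update (hψ : IsProperPartial G ψ) (hxv : G.Adj x v)
    (hx : IsMissing ψ x c) (hv : IsMissing ψ v c) :
    IsProperPartial G (Function.update ψ s(x, v) (some c)) := by
  have hends : ∀ u ∈ s(x, v), IsMissing ψ u c := Sym2.ball.2 ⟨hx, hv⟩
  refine isProperPartial_iff.2 ⟨fun a b d hab ↦ ?_, fun a b b' d hb hb' ↦ ?_⟩
  · rw [Function.update_apply] at hab
    split_ifs at hab with he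
    · rwa [← G.mem_edgeSet, he]
    · exact hψ.adj hab
  · rw [Function.update_apply] at hb hb'
    split_ifs at hb hb' with he he' he'
    · exact Sym2.congr_right.1 (he.trans he'.symm)
    · exact absurd (hb'.trans hb.symm) (hends a (he ▸ Sym2.mem_mk_left a b) b')
    · exact absurd (hb.trans hb'.symm) (hends a (he' ▸ Sym2.mem_mk_left a b') b)
    · exact hψ.eq_of_eq_some hb hb'

theorem IsMissing.update (h : IsMissing ψ v c) (hv : v ∉ e) :
    IsMissing (Function.update ψ e o) v c := by
  intro w
  rw [Function.update_of_ne]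
  · exact h w
  · rintro rfl
    exact hv (Sym2.mem_mk_left v w)

theorem _root_.IsProperPartial.isMissing_update (hψ : IsProperPartial G ψ)
    (hd : ψ s(x, v) = some d) (ho : o ≠ some d) :
    IsMissing (Function.update ψ s(x, v) o) x d := by
  intro w hw
  rw [Function.update_apply] at hw
  split_ifs at hw with hwv
  · exact ho hw
  · exact hwv (Sym2.congr_right.2 (hψ.eq_of_eq_some hw hd))

end Update

section Fan

variable {y : ℕ → V} {j k : ℕ}

/-- A Vizing fan at `x` consists of the vertices `y 0, …, y k`; the values of `y` beyond `k` are
irrelevant. The edge `s(x, y 0)` is the one to be colored. -/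
structure IsFan (G : SimpleGraph V) (ψ : Sym2 V → Option C) (x : V) (y : ℕ → V) (k : ℕ) : Prop where
  adj_zero : G.Adj x (y 0)
  eq_none : ψ s(x, y 0) = none
  injOn : Set.InjOn y (Set.Iic k)
  exists_isMissing : ∀ i < k, ∃ c, ψ s(x, y (i + 1)) = some c ∧ IsMissing ψ (y i) c

namespace IsFan

theorem mono (hy : IsFan G ψ x y k) (hjk : j ≤ k) : IsFan G ψ x y j where
  adj_zero := hy.adj_zero
  eq_none := hy.eq_none
  injOn := hy.injOn.mono (Set.Iic_subset_Iic.2 hjk)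
  exists_isMissing i hi := hy.exists_isMissing i (hi.trans_le hjk)

theorem adj (hy : IsFan G ψ x y k) (hψ : IsProperPartial G ψ) {i : ℕ} (hi : i ≤ k) :
    G.Adj x (y i) := by
  cases i with
  | zero => exact hy.adj_zero
  | succ i =>
    obtain ⟨c, hc, -⟩ := hy.exists_isMissing i hi
    exact hψ.adj hc

theorem ne_of_lt (hy : IsFan G ψ x y k) {i : ℕ} (hij : i < j) (hj : j ≤ k) : y i ≠ y j :=
  fun h ↦ hij.ne (hy.injOn (hij.le.trans hj) hj h)

theorem eq_of_eq_some (hy : IsFan G ψ x y k) (hψ : IsProperPartial G ψ) {i : ℕ} (hi : i < k)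
    (hj : j < k) (hic : ψ s(x, y (i + 1)) = some c) (hjc : ψ s(x, y (j + 1)) = some c) : i = j :=
  Nat.succ_injective (hy.injOn hi hj (hψ.eq_of_eq_some hic hjc))

theorem length_le_card [Finite C] (hy : IsFan G ψ x y k) (hψ : IsProperPartial G ψ) :
    k ≤ Nat.card C := by
  choose color hcolor _ using fun i : Fin k ↦ hy.exists_isMissing i i.isLt
  have hinj : Function.Injective color := fun i j hij ↦
    Fin.ext (hy.eq_of_eq_some hψ i.isLt j.isLt (hcolor i) (hij ▸ hcolor j))
  simpa only [Nat.card_fin] using Nat.card_le_card_of_injective color hinj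

theorem notMem_edge (hy : IsFan G ψ x y k) (hψ : IsProperPartial G ψ) {i : ℕ} (hij : i < j)
    (hj : j ≤ k) : y i ∉ s(x, y j) := by
  rw [Sym2.mem_iff, not_or]
  exact ⟨(hy.adj hψ (hij.le.trans hj)).ne', hy.ne_of_lt hij hj⟩

theorem update_last [DecidableEq V] (hy : IsFan G ψ x y (k + 1)) (hψ : IsProperPartial G ψ)
    (o : Option C) : IsFan G (Function.update ψ s(x, y (k + 1)) o) x y k := by
  have hne : ∀ i ≤ k, s(x, y i) ≠ s(x, y (k + 1)) := fun i hi ↦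
    mt Sym2.congr_right.1 (hy.ne_of_lt (Nat.lt_succ_of_le hi) le_rfl)
  refine ⟨hy.adj_zero, ?_, (hy.mono k.le_succ).injOn, fun i hi ↦ ?_⟩
  · rw [Function.update_of_ne (hne 0 k.zero_le), hy.eq_none]
  · obtain ⟨c, hc, hmissing⟩ := hy.exists_isMissing i (Nat.lt_succ_of_lt hi)
    exact ⟨c, by rwa [Function.update_of_ne (hne (i + 1) hi)],
      hmissing.update (hy.notMem_edge hψ (Nat.lt_succ_of_lt hi) le_rfl)⟩

theorem isExtendableAt_of_isMissing (hy : IsFan G ψ x y k) (hψ : IsProperPartial G ψ)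
    (hx : IsMissing ψ x c) (hk : IsMissing ψ (y k) c) : IsExtendableAt G ψ s(x, y 0) := by
  classical
  induction k generalizing ψ c with
  | zero =>
    exact ⟨_, hψ.update hy.adj_zero hx hk, fun f ↦ by by_cases hf : f = s(x, y 0) <;> simp [hf]⟩
  | succ k ih =>
    obtain ⟨d, hd, hdk⟩ := hy.exists_isMissing k k.lt_succ_self
    have hcd : some c ≠ some d := fun h ↦ hx (y (k + 1)) (hd.trans h.symm)
    have hψ' := hψ.update (hy.adj hψ le_rfl) hx hk
    have hy' := hy.update_last hψ (some c)
    have hdx' := hψ.isMissing_update hd hcd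
    have hdk' := hdk.update (o := some c) (hy.notMem_edge hψ k.lt_succ_self le_rfl)
    refine (ih hy' hψ' hdx' hdk').of_eq_none_iff fun f ↦ ?_
    by_cases hf : f = s(x, y (k + 1)) <;> simp [hf, hd]

theorem update_succ (hy : IsFan G ψ x y k) (hk : IsMissing ψ (y k) c) (hw : ψ s(x, w) = some c)
    (hnew : ∀ i ≤ k, y i ≠ w) : IsFan G ψ x (Function.update y (k + 1) w) (k + 1) := by
  set y' := Function.update y (k + 1) w
  have hlast : y' (k + 1) = w := Function.update_self ..
  have hold : ∀ i ≤ k, y' i = y i := fun i hi ↦ Function.update_of_ne (by lia) ..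
  have hEqOn : Set.EqOn y' y (Set.Iic k) := hold
  refine ⟨?_, ?_, ?_, fun i hi ↦ ?_⟩
  · exact hold 0 k.zero_le ▸ hy.adj_zero
  · exact hold 0 k.zero_le ▸ hy.eq_none
  · rw [← Order.succ_eq_add_one, Order.Iic_succ, Set.injOn_insert (by simp)]
    refine ⟨hEqOn.injOn_iff.2 hy.injOn, ?_⟩
    rintro ⟨i, hi, hiw⟩
    exact hnew i hi ((hold i hi).symm.trans (hiw.trans hlast))
  · rw [hold i (Nat.le_of_lt_succ hi)]
    rcases (Nat.le_of_lt_succ hi).lt_or_eq with hik | rfl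
    · rw [hold (i + 1) hik]
      exact hy.exists_isMissing i hik
    · exact ⟨c, by rwa [hlast], hk⟩

end IsFan

theorem exists_maximal_isFan [Finite C] (hψ : IsProperPartial G ψ) (hadj : G.Adj x v)
    (hnone : ψ s(x, v) = none) :
    ∃ k y, y 0 = v ∧ IsFan G ψ x y k ∧ ∀ y', y' 0 = v → ¬ IsFan G ψ x y' (k + 1) := by
  by_contra! h
  have hall : ∀ k, ∃ y, y 0 = v ∧ IsFan G ψ x y k := by
    intro k
    induction k with
    | zero => exact ⟨fun _ ↦ v, rfl, hadj, hnone, by simp [Set.InjOn], by simp⟩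
    | succ k ih =>
      obtain ⟨y, hy0, hy⟩ := ih
      exact h k y hy0 hy
  obtain ⟨y, -, hy⟩ := hall (Nat.card C + 1)
  exact (hy.length_le_card hψ).not_gt (Nat.lt_succ_self _)

end Fan

section Path

variable {H : SimpleGraph V} {a b z : V} {p : H.Walk a b}

theorem encard_neighborSet_toSubgraph_eq_two (hp : p.IsPath) (hz : z ∈ p.support) (hza : z ≠ a)
    (hzb : z ≠ b) : (p.toSubgraph.neighborSet z).encard = 2 := by
  obtain ⟨i, rfl, hi⟩ := SimpleGraph.Walk.mem_support_iff_exists_getVert.1 hz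
  have hi₀ : i ≠ 0 := by
    rintro rfl
    exact hza p.getVert_zero
  have hi_lt : i < p.length := hi.lt_of_ne <| by
    rintro rfl
    exact hzb p.getVert_length
  rw [← p.finite_neighborSet_toSubgraph.cast_ncard_eq,
    hp.ncard_neighborSet_toSubgraph_internal_eq_two hi₀ hi_lt, Nat.cast_ofNat]

theorem neighborSet_toSubgraph_eq (hdeg : ∀ v, (H.neighborSet v).encard ≤ 2)
    (ha : (H.neighborSet a).encard ≤ 1) (hb : (H.neighborSet b).encard ≤ 1) (hab : a ≠ b)
    (hp : p.IsPath) (hz : z ∈ p.support) : p.toSubgraph.neighborSet z = H.neighborSet z := by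
  have hnil : ¬ p.Nil := fun h ↦ hab h.eq
  suffices hcard : (H.neighborSet z).encard ≤ (p.toSubgraph.neighborSet z).encard from
    p.finite_neighborSet_toSubgraph.eq_of_subset_of_encard_le
      (p.toSubgraph.neighborSet_subset z) hcard
  by_cases hza : z = a
  · rwa [hza, hp.neighborSet_toSubgraph_startpoint hnil, Set.encard_singleton]
  by_cases hzb : z = b
  · rwa [hzb, hp.neighborSet_toSubgraph_endpoint hnil, Set.encard_singleton]
  rw [encard_neighborSet_toSubgraph_eq_two hp hz hza hzb]
  exact hdeg z

theorem eq_or_eq_of_reachable_of_encard_neighborSet_le_one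
    (hdeg : ∀ v, (H.neighborSet v).encard ≤ 2)
    (ha : (H.neighborSet a).encard ≤ 1) (hb : (H.neighborSet b).encard ≤ 1)
    (hz : (H.neighborSet z).encard ≤ 1) (hab : a ≠ b) (hreach_b : H.Reachable a b)
    (hreach_z : H.Reachable a z) : z = a ∨ z = b := by
  obtain ⟨p, hp⟩ := hreach_b.exists_isPath
  have hneighbors {v : V} (hv : v ∈ p.support) := neighborSet_toSubgraph_eq hdeg ha hb hab hp hv
  have hz_mem : z ∈ p.support := by
    refine p.mem_verts_toSubgraph.1 (hreach_z.mem_subgraphVerts (fun v hv w hvw ↦ ?_)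
      p.start_mem_verts_toSubgraph)
    exact (hneighbors (p.mem_verts_toSubgraph.1 hv)).ge hvw
  by_contra! hne
  rw [← hneighbors hz_mem, encard_neighborSet_toSubgraph_eq_two hp hz_mem hne.1 hne.2] at hz
  norm_num at hz

end Path

section Kempe

/-- The graph of the edges colored `α` or `β`; its components are the Kempe chains. -/
def kempeGraph (ψ : Sym2 V → Option C) (α β : C) : SimpleGraph V :=
  SimpleGraph.fromEdgeSet {e | ψ e = some α ∨ ψ e = some β}

theorem kempeGraph_reachable_of_eq_some (h : ψ s(v, w) = some α ∨ ψ s(v, w) = some β) :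
    (kempeGraph ψ α β).Reachable v w := by
  by_cases hvw : v = w
  · exact hvw ▸ .rfl
  · exact ((SimpleGraph.fromEdgeSet_adj _).2 ⟨h, hvw⟩ : (kempeGraph ψ α β).Adj v w).reachable

theorem _root_.IsProperPartial.encard_colored_le_one (hψ : IsProperPartial G ψ) (v : V) (c : C) :
    {w | ψ s(v, w) = some c}.encard ≤ 1 :=
  Set.encard_le_one_iff.2 fun _ _ hu hw ↦ hψ.eq_of_eq_some hu hw

theorem neighborSet_kempeGraph_subset (ψ : Sym2 V → Option C) (α β : C) (v : V) :
    (kempeGraph ψ α β).neighborSet v ⊆ {w | ψ s(v, w) = some α} ∪ {w | ψ s(v, w) = some β} :=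
  fun _ hw ↦ ((SimpleGraph.fromEdgeSet_adj _).1 hw).1

theorem encard_neighborSet_kempeGraph_le_two (hψ : IsProperPartial G ψ) (α β : C) (v : V) :
    ((kempeGraph ψ α β).neighborSet v).encard ≤ 2 :=
  calc
    _ ≤ ({w | ψ s(v, w) = some α} ∪ {w | ψ s(v, w) = some β}).encard :=
      Set.encard_le_encard (neighborSet_kempeGraph_subset ψ α β v)
    _ ≤ _ + _ := Set.encard_union_le _ _
    _ ≤ 1 + 1 := add_le_add (hψ.encard_colored_le_one v α) (hψ.encard_colored_le_one v β)
    _ = 2 := one_add_one_eq_two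

theorem encard_neighborSet_kempeGraph_le_one (hψ : IsProperPartial G ψ)
    (hv : IsMissing ψ v α ∨ IsMissing ψ v β) :
    ((kempeGraph ψ α β).neighborSet v).encard ≤ 1 := by
  have hsubset := neighborSet_kempeGraph_subset ψ α β v
  rcases hv with hα | hβ
  · refine (Set.encard_le_encard fun w hw ↦ ?_).trans (hψ.encard_colored_le_one v β)
    exact (hsubset hw).resolve_left (hα w)
  · refine (Set.encard_le_encard fun w hw ↦ ?_).trans (hψ.encard_colored_le_one v α)
    exact (hsubset hw).resolve_right (hβ w)

theorem eq_or_eq_of_reachable_of_isMissing (hψ : IsProperPartial G ψ)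
    (hu : IsMissing ψ u α ∨ IsMissing ψ u β) (hv : IsMissing ψ v α ∨ IsMissing ψ v β)
    (hw : IsMissing ψ w α ∨ IsMissing ψ w β) (huv : u ≠ v)
    (hreach_v : (kempeGraph ψ α β).Reachable u v) (hreach_w : (kempeGraph ψ α β).Reachable u w) :
    w = u ∨ w = v :=
  eq_or_eq_of_reachable_of_encard_neighborSet_le_one
    (encard_neighborSet_kempeGraph_le_two hψ α β) (encard_neighborSet_kempeGraph_le_one hψ hu)
    (encard_neighborSet_kempeGraph_le_one hψ hv) (encard_neighborSet_kempeGraph_le_one hψ hw)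
    huv hreach_v hreach_w

open Classical in
/-- The permutation of the colors by which the Kempe swap at `x` acts on the edges at `v`. -/
noncomputable def kempePerm (ψ : Sym2 V → Option C) (α β : C) (x v : V) : Equiv.Perm C :=
  if (kempeGraph ψ α β).Reachable x v then Equiv.swap α β else 1

theorem kempePerm_apply_left (h : (kempeGraph ψ α β).Reachable x v) :
    kempePerm ψ α β x v α = β := by
  classical rw [kempePerm, if_pos h, Equiv.swap_apply_left]

theorem kempePerm_eq_one (h : ¬ (kempeGraph ψ α β).Reachable x v) : kempePerm ψ α β x v = 1 :=
  if_neg h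

theorem kempePerm_congr
    (h : (kempeGraph ψ α β).Reachable x v ↔ (kempeGraph ψ α β).Reachable x w) :
    kempePerm ψ α β x v = kempePerm ψ α β x w := by
  classical rw [kempePerm, kempePerm, if_congr h rfl rfl]

theorem kempePerm_apply_of_ne (hα : c ≠ α) (hβ : c ≠ β) : kempePerm ψ α β x v c = c := by
  classical
  rw [kempePerm]
  split_ifs
  · exact Equiv.swap_apply_of_ne_of_ne hα hβ
  · rfl

theorem kempePerm_apply_eq_of_eq_some (h : ψ s(v, w) = some c) :
    kempePerm ψ α β x v c = kempePerm ψ α β x w c := by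
  by_cases hc : c = α ∨ c = β
  · have hvw : (kempeGraph ψ α β).Reachable v w :=
      kempeGraph_reachable_of_eq_some (hc.imp
        (h.trans <| congrArg some ·) (h.trans <| congrArg some ·))
    rw [kempePerm_congr ⟨(·.trans hvw), (·.trans hvw.symm)⟩]
  · rw [not_or] at hc
    rw [kempePerm_apply_of_ne hc.1 hc.2, kempePerm_apply_of_ne hc.1 hc.2]

theorem map_kempePerm_comm (ψ : Sym2 V → Option C) (α β : C) (x v w : V) :
    (ψ s(v, w)).map (kempePerm ψ α β x v) = (ψ s(w, v)).map (kempePerm ψ α β x w) := by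
  rw [Sym2.eq_swap (a := w)]
  exact Option.map_congr fun c hc ↦ kempePerm_apply_eq_of_eq_some hc

/-- The Kempe change: the colors `α` and `β` are swapped on the component of `x` in
`kempeGraph ψ α β`. The permutation is read off at either endpoint of an edge. -/
noncomputable def kempeSwap (ψ : Sym2 V → Option C) (α β : C) (x : V) : Sym2 V → Option C :=
  Sym2.lift ⟨fun v w ↦ (ψ s(v, w)).map (kempePerm ψ α β x v), map_kempePerm_comm ψ α β x⟩

theorem kempeSwap_eq_none_iff (e : Sym2 V) : kempeSwap ψ α β x e = none ↔ ψ e = none := by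
  induction e using Sym2.ind with
  | h v w => exact Option.map_eq_none_iff

theorem kempeSwap_eq_some_iff :
    kempeSwap ψ α β x s(v, w) = some (kempePerm ψ α β x v c) ↔ ψ s(v, w) = some c :=
  (Option.map_injective (kempePerm ψ α β x v).injective).eq_iff' (Option.map_some ..)

theorem isMissing_kempeSwap_iff :
    IsMissing (kempeSwap ψ α β x) v (kempePerm ψ α β x v c) ↔ IsMissing ψ v c :=
  forall_congr' fun _ ↦ kempeSwap_eq_some_iff.not

theorem _root_.IsProperPartial.kempeSwap (hψ : IsProperPartial G ψ) (α β : C) (x : V) :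
    IsProperPartial G (kempeSwap ψ α β x) := by
  refine isProperPartial_iff.2 ⟨fun v w c h ↦ ?_, fun v u w c hu hw ↦ ?_⟩
  · obtain ⟨d, rfl⟩ := (kempePerm ψ α β x v).surjective c
    exact hψ.adj (kempeSwap_eq_some_iff.1 h)
  · obtain ⟨d, rfl⟩ := (kempePerm ψ α β x v).surjective c
    exact hψ.eq_of_eq_some (kempeSwap_eq_some_iff.1 hu) (kempeSwap_eq_some_iff.1 hw)

end Kempe

section Extension

variable {y : ℕ → V} {j k : ℕ}

namespace IsFan

theorem kempeSwap (hy : IsFan G ψ x y k) (hα : IsMissing ψ x α)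
    (hβ : ∀ i < k, ψ s(x, y (i + 1)) = some β → (kempeGraph ψ α β).Reachable x (y i)) :
    IsFan G (kempeSwap ψ α β x) x y k := by
  refine ⟨hy.adj_zero, (kempeSwap_eq_none_iff _).2 hy.eq_none, hy.injOn, fun i hi ↦ ?_⟩
  obtain ⟨c, hc, hmissing⟩ := hy.exists_isMissing i hi
  refine ⟨kempePerm ψ α β x x c, kempeSwap_eq_some_iff.2 hc, ?_⟩
  suffices hperm : kempePerm ψ α β x x c = kempePerm ψ α β x (y i) c by
    rw [hperm]
    exact isMissing_kempeSwap_iff.2 hmissing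
  by_cases hcβ : c = β
  · rw [kempePerm_congr (iff_of_true .rfl (hβ i hi (hcβ ▸ hc)))]
  · have hcα : c ≠ α := by
      rintro rfl
      exact hα _ hc
    rw [kempePerm_apply_of_ne hcα hcβ, kempePerm_apply_of_ne hcα hcβ]

theorem isExtendableAt_of_not_reachable (hy : IsFan G ψ x y k) (hψ : IsProperPartial G ψ)
    (hα : IsMissing ψ x α) (hk : IsMissing ψ (y k) β)
    (hk_reach : ¬ (kempeGraph ψ α β).Reachable x (y k))
    (hβ : ∀ i < k, ψ s(x, y (i + 1)) = some β → (kempeGraph ψ α β).Reachable x (y i)) :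
    IsExtendableAt G ψ s(x, y 0) := by
  have hx' : IsMissing (Vizing.kempeSwap ψ α β x) x β := by
    simpa only [kempePerm_apply_left .rfl] using
      (isMissing_kempeSwap_iff (α := α) (β := β) (x := x)).2 hα
  have hk' : IsMissing (Vizing.kempeSwap ψ α β x) (y k) β := by
    simpa only [kempePerm_eq_one hk_reach, Equiv.Perm.one_apply] using
      (isMissing_kempeSwap_iff (α := α) (β := β) (x := x)).2 hk
  exact ((hy.kempeSwap hα hβ).isExtendableAt_of_isMissing (hψ.kempeSwap α β x) hx' hk'
    ).of_eq_none_iff kempeSwap_eq_none_iff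

theorem isExtendableAt_of_eq_some (hy : IsFan G ψ x y k) (hψ : IsProperPartial G ψ)
    (hα : IsMissing ψ x α) (hk : IsMissing ψ (y k) β) (hj : j < k)
    (hjβ : ψ s(x, y (j + 1)) = some β) : IsExtendableAt G ψ s(x, y 0) := by
  obtain ⟨c, hc, hjc⟩ := hy.exists_isMissing j hj
  obtain rfl : β = c := Option.some_injective C (hjβ.symm.trans hc)
  have hunique : ∀ i < k, ψ s(x, y (i + 1)) = some β → i = j := fun i hi hi' ↦
    hy.eq_of_eq_some hψ hi hj hi' hjβ
  by_cases hj_reach : (kempeGraph ψ α β).Reachable x (y j)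
  · have hk_reach : ¬ (kempeGraph ψ α β).Reachable x (y k) := by
      intro hk_reach
      rcases eq_or_eq_of_reachable_of_isMissing hψ (.inl hα) (.inr hjc) (.inr hk)
        (hy.adj hψ hj.le).ne hj_reach hk_reach with hkx | hkj
      · exact (hy.adj hψ le_rfl).ne' hkx
      · exact hy.ne_of_lt hj le_rfl hkj.symm
    exact hy.isExtendableAt_of_not_reachable hψ hα hk hk_reach fun i hi hi' ↦
      hunique i hi hi' ▸ hj_reach
  · exact (hy.mono hj.le).isExtendableAt_of_not_reachable hψ hα hjc hj_reach fun i hi hi' ↦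
      absurd (hunique i (hi.trans hj) hi') hi.ne

end IsFan

theorem _root_.IsProperPartial.isExtendableAt [Finite C] (hψ : IsProperPartial G ψ)
    (hmissing : ∀ v, ∃ c, IsMissing ψ v c) (hadj : G.Adj x v) (hnone : ψ s(x, v) = none) :
    IsExtendableAt G ψ s(x, v) := by
  classical
  obtain ⟨k, y, rfl, hy, hmax⟩ := exists_maximal_isFan hψ hadj hnone
  obtain ⟨α, hα⟩ := hmissing x
  obtain ⟨β, hk⟩ := hmissing (y k)
  by_cases hβ : IsMissing ψ x β
  · exact hy.isExtendableAt_of_isMissing hψ hβ hk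
  obtain ⟨w, hw⟩ : ∃ w, ψ s(x, w) = some β := by simpa [IsMissing] using hβ
  obtain ⟨i, hi, rfl⟩ : ∃ i ≤ k, y i = w := by
    by_contra! hnew
    exact hmax _ (Function.update_of_ne (by lia) ..) (hy.update_succ hk hw hnew)
  cases i with
  | zero => simp [hnone] at hw
  | succ j => exact hy.isExtendableAt_of_eq_some hψ hα hk hi hw

end Extension

end Vizing

theorem extend_partial_coloring_by_one_edge_general {V C : Type*} [Finite C] (G : SimpleGraph V)
    (ψ : Sym2 V → Option C) (hψ : IsProperPartial G ψ) (hmissing : ∀ v, ∃ c, Vizing.IsMissing ψ v c)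
    (e : Sym2 V) (he : e ∈ G.edgeSet) (hue : ψ e = none) :
    ∃ ψ' : Sym2 V → Option C, IsProperPartial G ψ' ∧
      ∀ f, ψ' f ≠ none ↔ (ψ f ≠ none ∨ f = e) := by
  induction e using Sym2.ind with
  | h x v => exact hψ.isExtendableAt hmissing he hue

/-- Any proper partial `(Δ+1)`-edge coloring of a simple graph `G` with maximum degree `Δ`
can be extended by one more edge: for any uncolored edge `e` of `G`, there is a proper
partial `(Δ+1)`-edge coloring whose set of colored edges is the old one together with `e`. -/
theorem extend_partial_coloring_by_one_edge {V : Type*} [Fintype V] (G : SimpleGraph V)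
    [DecidableRel G.Adj] (Δ : ℕ) (hΔ : G.maxDegree ≤ Δ)
    (ψ : Sym2 V → Option (Fin (Δ + 1))) (hψ : IsProperPartial G ψ)
    (e : Sym2 V) (he : e ∈ G.edgeSet) (hue : ψ e = none) :
    ∃ ψ' : Sym2 V → Option (Fin (Δ + 1)), IsProperPartial G ψ' ∧
      ∀ f, ψ' f ≠ none ↔ (ψ f ≠ none ∨ f = e) :=
  extend_partial_coloring_by_one_edge_general G ψ hψ
    (fun v ↦ hψ.exists_isMissing (by simpa using (G.degree_le_maxDegree v).trans hΔ)) e he hue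
end

section
/- Let ψ be a proper partial edge coloring of a simple graph G, let x, y be two distinct colors, and let P be a maximal {x,y}-alternating path in G. Define ψ' to agree with ψ on every edge not on P, and on each edge of P to exchange the colors x and y (edges of P colored x get color y and vice versa). Then ψ' is again a proper partial edge coloring of G with the same set of colored edges, and for each endpoint v of P the missing sets satisfy: if exactly one of x, y was missing at v under ψ, then the other one of x, y is missing at v under ψ'. The missing sets of all vertices not an endpoint of P are unchanged. -/
/-- An `{x,y}`-alternating path: a simple path all of whose edges are colored `x` or `y`. -/
def IsAltPath {V C : Type*} (G : SimpleGraph V) (ψ : Sym2 V → Option C) (x y : C)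
    {a b : V} (p : G.Walk a b) : Prop :=
  p.IsPath ∧ ∀ e ∈ p.edges, ψ e = some x ∨ ψ e = some y

/-- A maximal `{x,y}`-alternating path. -/
def IsMaxAltPath {V C : Type*} (G : SimpleGraph V) (ψ : Sym2 V → Option C) (x y : C)
    {a b : V} (p : G.Walk a b) : Prop :=
  IsAltPath G ψ x y p ∧
  (∀ w, G.Adj a w → (ψ s(a, w) = some x ∨ ψ s(a, w) = some y) → s(a, w) ∈ p.edges) ∧
  (∀ w, G.Adj b w → (ψ s(b, w) = some x ∨ ψ s(b, w) = some y) → s(b, w) ∈ p.edges)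

/-- The color `c` is missing at the vertex `v` under `ψ`. -/
def MissingAt {V C : Type*} (G : SimpleGraph V) (ψ : Sym2 V → Option C) (c : C)
    (v : V) : Prop :=
  ∀ w, G.Adj v w → ψ s(v, w) ≠ some c

section Recoloring

variable {V C D : Type*} {G : SimpleGraph V} {ψ : Sym2 V → Option C} {ψ' : Sym2 V → Option D}
  {v : V} {c : C}

theorem IsProperPartial.mem_edgeSet (hψ : IsProperPartial G ψ) {e : Sym2 V}
    (he : ψ e = some c) : e ∈ G.edgeSet :=
  hψ.1 e (he ▸ Option.some_ne_none c)

theorem IsProperPartial.eq_of_color_eq (hψ : IsProperPartial G ψ) {e f : Sym2 V}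
    (hve : v ∈ e) (hvf : v ∈ f) (he : ψ e = some c) (hf : ψ f = some c) : e = f := by
  by_contra hef
  exact hψ.2 e (hψ.mem_edgeSet he) f (hψ.mem_edgeSet hf) hef ⟨v, hve, hvf⟩ c he hf

theorem IsProperPartial.of_locally_injective_recoloring (hψ : IsProperPartial G ψ)
    (h : ∀ v, ∃ σ : C → D, Function.Injective σ ∧ ∀ e, v ∈ e → ψ' e = (ψ e).map σ) :
    IsProperPartial G ψ' := by
  refine ⟨fun e he => ?_, ?_⟩
  · obtain ⟨σ, -, hσ⟩ := h e.out.1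
    rw [hσ e e.out_fst_mem, Ne, Option.map_eq_none_iff] at he
    exact hψ.1 e he
  · rintro e - f - hef ⟨v, hve, hvf⟩ d he hf
    obtain ⟨σ, σ_inj, hσ⟩ := h v
    obtain ⟨c, hec, rfl⟩ := Option.map_eq_some_iff.1 (hσ e hve ▸ he)
    obtain ⟨c', hfc', hcc'⟩ := Option.map_eq_some_iff.1 (hσ f hvf ▸ hf)
    obtain rfl := σ_inj hcc'
    exact hef (hψ.eq_of_color_eq hve hvf hec hfc')

theorem missingAt_apply_iff_of_injective {σ : C → D} (σ_inj : Function.Injective σ)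
    (h : ∀ e, v ∈ e → ψ' e = (ψ e).map σ) :
    MissingAt G ψ' (σ c) v ↔ MissingAt G ψ c v := by
  refine forall₂_congr fun w _ => not_congr ?_
  rw [h _ (Sym2.mem_mk_left v w), ← Option.map_some, (Option.map_injective σ_inj).eq_iff]

theorem IsProperPartial.not_missingAt (hψ : IsProperPartial G ψ) {e : Sym2 V} (hve : v ∈ e)
    (he : ψ e = some c) : ¬ MissingAt G ψ c v := by
  obtain ⟨w, rfl⟩ := Sym2.mem_iff_exists.1 hve
  exact fun h => h w (hψ.mem_edgeSet he) he

theorem missingAt_swap_iff [DecidableEq C] {x y : C}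
    (h : MissingAt G ψ x v ↔ MissingAt G ψ y v) (c : C) :
    MissingAt G ψ (Equiv.swap x y c) v ↔ MissingAt G ψ c v := by
  obtain rfl | hx := eq_or_ne c x
  · rw [Equiv.swap_apply_left, h]
  obtain rfl | hy := eq_or_ne c y
  · rw [Equiv.swap_apply_right, h]
  rw [Equiv.swap_apply_of_ne_of_ne hx hy]

end Recoloring

section Flip

variable {V C : Type*}

/-- The coloring `ψ'` arises from `ψ` by exchanging the colors `x` and `y` on the edges in `S`.
This is a relation between colorings rather than an operation, so that membership in `S` need not
be decidable. -/
structure IsFlip [DecidableEq C] (S : Set (Sym2 V)) (x y : C) (ψ ψ' : Sym2 V → Option C) :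
    Prop where
  apply_of_mem : ∀ e ∈ S, ψ' e = (ψ e).map (Equiv.swap x y)
  apply_of_notMem : ∀ e ∉ S, ψ' e = ψ e

/-- The edge set `S` is saturated at `v` if it contains every edge at `v` colored `x` or `y`: an
`{x,y}`-alternating path with edge set `S` cannot be continued at `v`. -/
def IsSaturatedAt (ψ : Sym2 V → Option C) (x y : C) (S : Set (Sym2 V)) (v : V) : Prop :=
  ∀ e, v ∈ e → (ψ e = some x ∨ ψ e = some y) → e ∈ S

section Saturated

variable {G : SimpleGraph V} {ψ : Sym2 V → Option C} {x y : C} {S : Set (Sym2 V)} {v : V}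

theorem IsProperPartial.isSaturatedAt_of_adj (hψ : IsProperPartial G ψ)
    (h : ∀ w, G.Adj v w → (ψ s(v, w) = some x ∨ ψ s(v, w) = some y) → s(v, w) ∈ S) :
    IsSaturatedAt ψ x y S v := by
  intro e hve hc
  obtain ⟨w, rfl⟩ := Sym2.mem_iff_exists.1 hve
  exact h w (hc.elim hψ.mem_edgeSet hψ.mem_edgeSet) hc

theorem IsProperPartial.isSaturatedAt_of_mem (hψ : IsProperPartial G ψ)
    (hx : ∃ e ∈ S, v ∈ e ∧ ψ e = some x) (hy : ∃ e ∈ S, v ∈ e ∧ ψ e = some y) :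
    IsSaturatedAt ψ x y S v := by
  obtain ⟨e, heS, hve, hex⟩ := hx
  obtain ⟨f, hfS, hvf, hfy⟩ := hy
  rintro g hvg (hgx | hgy)
  · exact hψ.eq_of_color_eq hve hvg hex hgx ▸ heS
  · exact hψ.eq_of_color_eq hvf hvg hfy hgy ▸ hfS

end Saturated

variable [DecidableEq C]

theorem isFlip_iff_eq_ite {S : Set (Sym2 V)} [DecidablePred (· ∈ S)] {x y : C}
    {ψ ψ' : Sym2 V → Option C} :
    IsFlip S x y ψ ψ' ↔ ∀ e, ψ' e = if e ∈ S then
        (if ψ e = some x then some y else if ψ e = some y then some x else ψ e)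
      else ψ e := by
  have map_swap : ∀ o : Option C, o.map (Equiv.swap x y) =
      if o = some x then some y else if o = some y then some x else o := by
    rintro (_ | c)
    · simp
    · simp only [Option.map_some, Equiv.swap_apply_def, Option.some_inj]
      split_ifs <;> rfl
  simp only [← map_swap]
  constructor
  · intro h e
    split_ifs with he
    exacts [h.apply_of_mem e he, h.apply_of_notMem e he]
  · exact fun h => ⟨fun e he => by rw [h, if_pos he], fun e he => by rw [h, if_neg he]⟩

namespace IsFlip

variable {S : Set (Sym2 V)} {x y : C} {ψ ψ' : Sym2 V → Option C} {v : V}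

theorem eq_none_iff (h : IsFlip S x y ψ ψ') (e : Sym2 V) : ψ' e = none ↔ ψ e = none := by
  by_cases he : e ∈ S
  · rw [h.apply_of_mem e he, Option.map_eq_none_iff]
  · rw [h.apply_of_notMem e he]

theorem apply_of_isSaturatedAt (h : IsFlip S x y ψ ψ') (hv : IsSaturatedAt ψ x y S v)
    {e : Sym2 V} (hve : v ∈ e) : ψ' e = (ψ e).map (Equiv.swap x y) := by
  by_cases he : e ∈ S
  · exact h.apply_of_mem e he
  rw [h.apply_of_notMem e he]
  cases hc : ψ e with
  | none => rfl
  | some c =>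
    have hx : c ≠ x := fun hcx => he (hv e hve (.inl (hcx ▸ hc)))
    have hy : c ≠ y := fun hcy => he (hv e hve (.inr (hcy ▸ hc)))
    rw [Option.map_some, Equiv.swap_apply_of_ne_of_ne hx hy]

variable {G : SimpleGraph V}

theorem missingAt_swap_iff_of_isSaturatedAt (h : IsFlip S x y ψ ψ')
    (hv : IsSaturatedAt ψ x y S v) (c : C) :
    MissingAt G ψ' (Equiv.swap x y c) v ↔ MissingAt G ψ c v :=
  missingAt_apply_iff_of_injective (Equiv.swap x y).injective
    fun _ => h.apply_of_isSaturatedAt hv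

theorem missingAt_iff_of_forall_notMem (h : IsFlip S x y ψ ψ') (hv : ∀ e ∈ S, v ∉ e) (c : C) :
    MissingAt G ψ' c v ↔ MissingAt G ψ c v :=
  missingAt_apply_iff_of_injective (σ := id) Function.injective_id fun e hve => by
    rw [h.apply_of_notMem e fun he => hv e he hve, Option.map_id_fun, id]

theorem isProperPartial (h : IsFlip S x y ψ ψ') (hψ : IsProperPartial G ψ)
    (hS : ∀ e ∈ S, ∀ v ∈ e, IsSaturatedAt ψ x y S v) : IsProperPartial G ψ' := by
  refine hψ.of_locally_injective_recoloring fun v => ?_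
  by_cases hv : ∃ e ∈ S, v ∈ e
  · obtain ⟨e, he, hve⟩ := hv
    exact ⟨Equiv.swap x y, (Equiv.swap x y).injective,
      fun _ => h.apply_of_isSaturatedAt (hS e he v hve)⟩
  · refine ⟨id, Function.injective_id, fun e hve => ?_⟩
    rw [h.apply_of_notMem e fun he => hv ⟨e, he, hve⟩, Option.map_id_fun, id]

theorem missingAt_iff_of_mem (h : IsFlip S x y ψ ψ') (hψ : IsProperPartial G ψ)
    (hx : ∃ e ∈ S, v ∈ e ∧ ψ e = some x) (hy : ∃ e ∈ S, v ∈ e ∧ ψ e = some y) (c : C) :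
    MissingAt G ψ' c v ↔ MissingAt G ψ c v := by
  have hflip := h.missingAt_swap_iff_of_isSaturatedAt (G := G)
    (hψ.isSaturatedAt_of_mem hx hy) (Equiv.swap x y c)
  rw [Equiv.swap_apply_self] at hflip
  obtain ⟨e, -, hve, hex⟩ := hx
  obtain ⟨f, -, hvf, hfy⟩ := hy
  exact hflip.trans (missingAt_swap_iff (iff_of_false
    (hψ.not_missingAt hve hex) (hψ.not_missingAt hvf hfy)) c)

end IsFlip

end Flip

section Trail

variable {V C : Type*} {G : SimpleGraph V} {a b v : V} {p : G.Walk a b}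

theorem exists_ne_mem_edges_of_isTrail (hp : p.IsTrail) (hva : v ≠ a) (hvb : v ≠ b)
    {e : Sym2 V} (he : e ∈ p.edges) (hve : v ∈ e) : ∃ f ∈ p.edges, v ∈ f ∧ f ≠ e := by
  classical
  by_contra! honly
  have hcount : p.edges.countP (v ∈ ·) = p.edges.count e :=
    List.countP_congr fun f hf => by
      simpa using ⟨honly f hf, fun hfe => hfe ▸ hve⟩
  have heven : Even (p.edges.countP (v ∈ ·)) :=
    (hp.even_countP_edges_iff v).2 fun _ => ⟨hva, hvb⟩
  rw [hcount, List.count_eq_one_of_mem hp.edges_nodup he] at heven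
  exact Nat.not_even_one heven

variable {ψ : Sym2 V → Option C} {x y : C}

theorem IsProperPartial.exists_mem_edges_color_eq (hψ : IsProperPartial G ψ) (hp : p.IsTrail)
    (hcol : ∀ e ∈ p.edges, ψ e = some x ∨ ψ e = some y) (hva : v ≠ a) (hvb : v ≠ b)
    {e : Sym2 V} (he : e ∈ p.edges) (hve : v ∈ e) :
    (∃ f ∈ p.edges, v ∈ f ∧ ψ f = some x) ∧ ∃ f ∈ p.edges, v ∈ f ∧ ψ f = some y := by
  obtain ⟨f, hf, hvf, hfe⟩ := exists_ne_mem_edges_of_isTrail hp hva hvb he hve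
  rcases hcol e he with hex | hey <;> rcases hcol f hf with hfx | hfy
  · exact absurd (hψ.eq_of_color_eq hvf hve hfx hex) hfe
  · exact ⟨⟨e, he, hve, hex⟩, ⟨f, hf, hvf, hfy⟩⟩
  · exact ⟨⟨f, hf, hvf, hfx⟩, ⟨e, he, hve, hey⟩⟩
  · exact absurd (hψ.eq_of_color_eq hvf hve hfy hey) hfe

end Trail

/-- Besides paths, this covers the flip of an alternating cycle. -/
theorem flip_alt_path_correct_general {V C : Type*} [DecidableEq V] [DecidableEq C]
    (G : SimpleGraph V) (ψ : Sym2 V → Option C) (hψ : IsProperPartial G ψ)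
    (x y : C) {a b : V} (p : G.Walk a b) (hp : p.IsTrail)
    (hcol : ∀ e ∈ p.edges, ψ e = some x ∨ ψ e = some y)
    (ha : ∀ w, G.Adj a w → (ψ s(a, w) = some x ∨ ψ s(a, w) = some y) → s(a, w) ∈ p.edges)
    (hb : ∀ w, G.Adj b w → (ψ s(b, w) = some x ∨ ψ s(b, w) = some y) → s(b, w) ∈ p.edges)
    (ψ' : Sym2 V → Option C)
    (hψ' : ∀ e, ψ' e = if e ∈ p.edges then
        (if ψ e = some x then some y else if ψ e = some y then some x else ψ e)
      else ψ e) :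
    IsProperPartial G ψ' ∧
    (∀ e, ψ' e = none ↔ ψ e = none) ∧
    (∀ v, v = a ∨ v = b → ∀ c, MissingAt G ψ' (Equiv.swap x y c) v ↔ MissingAt G ψ c v) ∧
    (∀ v, v ≠ a → v ≠ b → ∀ c, MissingAt G ψ' c v ↔ MissingAt G ψ c v) := by
  have hflip : IsFlip {e | e ∈ p.edges} x y ψ ψ' := isFlip_iff_eq_ite.2 hψ'
  have hend : ∀ v, v = a ∨ v = b → IsSaturatedAt ψ x y {e | e ∈ p.edges} v := by
    rintro v (rfl | rfl)
    exacts [hψ.isSaturatedAt_of_adj ha, hψ.isSaturatedAt_of_adj hb]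
  refine ⟨hflip.isProperPartial hψ fun e he v hve => ?_, hflip.eq_none_iff,
    fun v hv => hflip.missingAt_swap_iff_of_isSaturatedAt (hend v hv), fun v hva hvb => ?_⟩
  · by_cases hv : v = a ∨ v = b
    · exact hend v hv
    obtain ⟨hva, hvb⟩ := not_or.1 hv
    obtain ⟨hx, hy⟩ := hψ.exists_mem_edges_color_eq hp hcol hva hvb he hve
    exact hψ.isSaturatedAt_of_mem hx hy
  · by_cases hv : ∃ e ∈ p.edges, v ∈ e
    · obtain ⟨e, he, hve⟩ := hv
      obtain ⟨hx, hy⟩ := hψ.exists_mem_edges_color_eq hp hcol hva hvb he hve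
      exact hflip.missingAt_iff_of_mem hψ hx hy
    · exact hflip.missingAt_iff_of_forall_notMem fun e he hve => hv ⟨e, he, hve⟩

/-- **Correctness of the flip operation.** Let `P` be a maximal `{x,y}`-alternating path
from `a` to `b` and let `ψ'` agree with `ψ` off `P` and exchange the colors `x` and `y` on
the edges of `P`.  Then `ψ'` is again a proper partial edge coloring with the same set of
colored edges; for each endpoint, if exactly one of `x, y` was missing under `ψ`, then the
other one is missing under `ψ'`; and the missing sets of all non-endpoint vertices are
unchanged. -/
theorem flip_alt_path_correct {V C : Type*} [DecidableEq V] [DecidableEq C]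
    (G : SimpleGraph V) (ψ : Sym2 V → Option C) (hψ : IsProperPartial G ψ)
    (x y : C) (hxy : x ≠ y) {a b : V} (p : G.Walk a b) (hp : IsMaxAltPath G ψ x y p)
    (ψ' : Sym2 V → Option C)
    (hψ' : ∀ e, ψ' e = if e ∈ p.edges then
        (if ψ e = some x then some y else if ψ e = some y then some x else ψ e)
      else ψ e) :
    IsProperPartial G ψ' ∧
    (∀ e, ψ' e = none ↔ ψ e = none) ∧
    (∀ v, v = a ∨ v = b →
      ((MissingAt G ψ x v ∧ ¬ MissingAt G ψ y v) → MissingAt G ψ' y v) ∧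
      ((MissingAt G ψ y v ∧ ¬ MissingAt G ψ x v) → MissingAt G ψ' x v)) ∧
    (∀ v, v ≠ a → v ≠ b → ∀ c, MissingAt G ψ' c v ↔ MissingAt G ψ c v) := by
  obtain ⟨hproper, hnone, hend, hinner⟩ := flip_alt_path_correct_general G ψ hψ x y p
    hp.1.1.isTrail hp.1.2 hp.2.1 hp.2.2 ψ' hψ'
  exact ⟨hproper, hnone, fun v hv => ⟨fun h => by simpa using (hend v hv x).2 h.1,
    fun h => by simpa using (hend v hv y).2 h.1⟩, hinner⟩
end

section
/- Let G be a simple graph with maximum degree Δ and ψ a proper partial (Δ+1)-edge coloring of G. Let u be a vertex with distinct neighbors v₀, v₁, …, v_k such that the edge (u, v₀) is uncolored, the edge (u, v_i) is colored for each 1 ≤ i ≤ k, ψ(u, v_i) ∈ miss_ψ(v_{i−1}) for each 1 ≤ i ≤ k, and miss_ψ(u) ∩ miss_ψ(v_k) ≠ ∅. Then there exists a proper partial (Δ+1)-edge coloring ψ' of G whose set of colored edges is the set of edges colored by ψ together with the edge (u, v₀); namely, the rotation ψ'(u, v_i) = ψ(u, v_{i+1}) for 0 ≤ i < k and ψ'(u,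 v_k) = x for any x ∈ miss_ψ(u) ∩ miss_ψ(v_k), leaving all other edges unchanged, is proper. -/
section

variable {V C ι : Type*} {G : SimpleGraph V} {ψ : Sym2 V → Option C} {u : V}

theorem isProperPartial_iff :
    IsProperPartial G ψ ↔
      (∀ a b c, ψ s(a, b) = some c → G.Adj a b) ∧
      ∀ a b b' c, ψ s(a, b) = some c → ψ s(a, b') = some c → b = b' := by
  constructor
  · rintro ⟨hsupp, hproper⟩
    have hadj : ∀ a b c, ψ s(a, b) = some c → G.Adj a b := fun a b c h =>
      hsupp s(a, b) (by simp [h])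
    refine ⟨hadj, fun a b b' c h h' => ?_⟩
    by_contra hne
    exact hproper s(a, b) (hadj a b c h) s(a, b') (hadj a b' c h') (mt Sym2.congr_right.mp hne)
      ⟨a, Sym2.mem_mk_left a b, Sym2.mem_mk_left a b'⟩ c h h'
  · rintro ⟨hadj, heq⟩
    refine ⟨fun e h => ?_, ?_⟩
    · obtain ⟨a, b⟩ := e
      obtain ⟨c, hc⟩ := Option.ne_none_iff_exists'.mp h
      exact hadj a b c hc
    · rintro _ - _ - hne ⟨a, ⟨b, rfl⟩, ⟨b', rfl⟩⟩ c h h'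
      exact hne (congrArg (s(a, ·)) (heq a b b' c h h'))

theorem IsProperPartial.adj_s15 (hψ : IsProperPartial G ψ) {a b : V} {c : C}
    (h : ψ s(a, b) = some c) : G.Adj a b :=
  (isProperPartial_iff.mp hψ).1 a b c h

theorem IsProperPartial.eq_of_eq_some_s15 (hψ : IsProperPartial G ψ) {a b b' : V} {c : C}
    (h : ψ s(a, b) = some c) (h' : ψ s(a, b') = some c) : b = b' :=
  (isProperPartial_iff.mp hψ).2 a b b' c h h'

theorem MissingAt.ne_some {a : V} {c : C} (h : MissingAt G ψ c a) (hψ : IsProperPartial G ψ)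
    (b : V) : ψ s(a, b) ≠ some c :=
  fun hb => h b (hψ.adj_s15 hb) hb

/-- The partial coloring obtained from `ψ` by giving each edge `s(u, v i)` of a star centered at `u`
the color `col i`; it is meant for injective `v`, so that the edges are distinct. -/
noncomputable def recolorStar (ψ : Sym2 V → Option C) (u : V) (v : ι → V) (col : ι → C) :
    Sym2 V → Option C :=
  Function.extend (fun i => s(u, v i)) (fun i => some (col i)) ψ

section recolorStar

variable {v : ι → V} {col : ι → C}

theorem recolorStar_apply (hv : Function.Injective v) (i : ι) :
    recolorStar ψ u v col s(u, v i) = some (col i) :=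
  Function.Injective.extend_apply (fun _ _ h => hv (Sym2.congr_right.mp h)) _ _ i

theorem recolorStar_of_forall_ne {e : Sym2 V} (he : ∀ i, e ≠ s(u, v i)) :
    recolorStar ψ u v col e = ψ e :=
  Function.extend_apply' _ _ _ fun ⟨i, hi⟩ => he i hi.symm

theorem eq_or_of_recolorStar_eq_some (hv : Function.Injective v) {e : Sym2 V} {c : C}
    (h : recolorStar ψ u v col e = some c) :
    (∃ i, e = s(u, v i) ∧ col i = c) ∨ (∀ i, e ≠ s(u, v i)) ∧ ψ e = some c := by
  by_cases he : ∃ i, e = s(u, v i)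
  · obtain ⟨i, rfl⟩ := he
    rw [recolorStar_apply hv, Option.some_inj] at h
    exact Or.inl ⟨i, rfl, h⟩
  · rw [not_exists] at he
    rw [recolorStar_of_forall_ne he] at h
    exact Or.inr ⟨he, h⟩

theorem recolorStar_ne_none_iff (hv : Function.Injective v) {e : Sym2 V} :
    recolorStar ψ u v col e ≠ none ↔ ψ e ≠ none ∨ ∃ i, e = s(u, v i) := by
  by_cases he : ∃ i, e = s(u, v i)
  · obtain ⟨i, rfl⟩ := he
    rw [recolorStar_apply hv]
    exact iff_of_true (Option.some_ne_none _) (Or.inr ⟨i, rfl⟩)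
  · rw [recolorStar_of_forall_ne (not_exists.mp he), or_iff_left he]

theorem IsProperPartial.recolorStar (hψ : IsProperPartial G ψ) (hv : Function.Injective v)
    (hadj : ∀ i, G.Adj u (v i)) (hcol : Function.Injective col)
    (hmiss : ∀ i, MissingAt G ψ (col i) (v i))
    (hcenter : ∀ i w, ψ s(u, w) = some (col i) → w ∈ Set.range v) :
    IsProperPartial G (recolorStar ψ u v col) := by
  have no_conflict : ∀ {a b b' i}, s(a, b) = s(u, v i) → (∀ j, s(a, b') ≠ s(u, v j)) →
      ψ s(a, b') ≠ some (col i) := by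
    intro a b b' i hstar hoff h
    rcases Sym2.eq_iff.mp hstar with ⟨rfl, rfl⟩ | ⟨rfl, rfl⟩
    · obtain ⟨j, rfl⟩ := hcenter i b' h
      exact hoff j rfl
    · exact (hmiss i).ne_some hψ b' h
  refine isProperPartial_iff.mpr ⟨fun a b c h => ?_, fun a b b' c h h' => ?_⟩
  · rcases eq_or_of_recolorStar_eq_some hv h with ⟨i, hi, -⟩ | ⟨-, h⟩
    · rw [← SimpleGraph.mem_edgeSet, hi]
      exact hadj i
    · exact hψ.adj_s15 h
  · rcases eq_or_of_recolorStar_eq_some hv h with ⟨i, hi, rfl⟩ | ⟨hoff, h⟩ <;>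
      rcases eq_or_of_recolorStar_eq_some hv h' with ⟨j, hj, hij⟩ | ⟨hoff', h'⟩
    · rw [hcol hij] at hj
      exact Sym2.congr_right.mp (hi.trans hj.symm)
    · exact absurd h' (no_conflict hi hoff')
    · exact absurd (hij ▸ h) (no_conflict hj hoff)
    · exact hψ.eq_of_eq_some_s15 h h'

end recolorStar

/-- A Vizing fan at `u` with leaves `v 0, …, v k`: the color of each fan edge after the first is
missing at the preceding leaf. The colors are indexed with a shift, `c i` being the color of
`s(u, v (i + 1))`, that is, the color the rotation gives to `s(u, v i)`. -/
structure IsVizingFan (G : SimpleGraph V) (ψ : Sym2 V → Option C) (u : V) {k : ℕ}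
    (v : Fin (k + 1) → V) (c : Fin k → C) : Prop where
  injective : Function.Injective v
  adj_s15 : ∀ i, G.Adj u (v i)
  color_eq : ∀ i : Fin k, ψ s(u, v i.succ) = some (c i)
  missingAt : ∀ i : Fin k, MissingAt G ψ (c i) (v i.castSucc)

namespace IsVizingFan

variable {k : ℕ} {v : Fin (k + 1) → V} {c : Fin k → C} {x : C}

theorem snoc_color_injective (hfan : IsVizingFan G ψ u v c) (hψ : IsProperPartial G ψ)
    (hxu : MissingAt G ψ x u) : Function.Injective (Fin.snoc c x : Fin (k + 1) → C) := by
  refine Fin.snoc_injective_of_injective (fun i j hij => ?_) ?_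
  · have hleaf : v i.succ = v j.succ :=
      hψ.eq_of_eq_some_s15 (hfan.color_eq i) (hij ▸ hfan.color_eq j)
    exact Fin.succ_injective k (hfan.injective hleaf)
  · rintro ⟨i, rfl⟩
    exact hxu _ (hfan.adj_s15 i.succ) (hfan.color_eq i)

theorem missingAt_snoc_color (hfan : IsVizingFan G ψ u v c)
    (hxk : MissingAt G ψ x (v (Fin.last k))) (i : Fin (k + 1)) :
    MissingAt G ψ (Fin.snoc (α := fun _ => C) c x i) (v i) := by
  induction i using Fin.lastCases with
  | last => rwa [Fin.snoc_last]
  | cast i => simpa only [Fin.snoc_castSucc] using hfan.missingAt i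

theorem mem_range_of_eq_snoc_color (hfan : IsVizingFan G ψ u v c) (hψ : IsProperPartial G ψ)
    (hxu : MissingAt G ψ x u) (i : Fin (k + 1)) (w : V)
    (hw : ψ s(u, w) = some (Fin.snoc (α := fun _ => C) c x i)) : w ∈ Set.range v := by
  induction i using Fin.lastCases with
  | last => exact absurd (by rwa [Fin.snoc_last] at hw) (hxu.ne_some hψ w)
  | cast i =>
    rw [Fin.snoc_castSucc] at hw
    exact ⟨i.succ, hψ.eq_of_eq_some_s15 (hfan.color_eq i) hw⟩

theorem isProperPartial_rotation (hfan : IsVizingFan G ψ u v c) (hψ : IsProperPartial G ψ)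
    (hxu : MissingAt G ψ x u) (hxk : MissingAt G ψ x (v (Fin.last k))) :
    IsProperPartial G (recolorStar ψ u v (Fin.snoc c x)) :=
  hψ.recolorStar hfan.injective hfan.adj_s15 (hfan.snoc_color_injective hψ hxu)
    (hfan.missingAt_snoc_color hxk) (hfan.mem_range_of_eq_snoc_color hψ hxu)

theorem ne_none_or_exists_iff (hfan : IsVizingFan G ψ u v c) (e : Sym2 V) :
    (ψ e ≠ none ∨ ∃ i, e = s(u, v i)) ↔ ψ e ≠ none ∨ e = s(u, v 0) := by
  refine ⟨?_, Or.imp_right fun he => ⟨0, he⟩⟩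
  rintro (he | ⟨i, rfl⟩)
  · exact Or.inl he
  · cases i using Fin.cases with
    | zero => exact Or.inr rfl
    | succ i => exact Or.inl (by simp [hfan.color_eq i])

end IsVizingFan

theorem vizing_fan_rotation_general (hψ : IsProperPartial G ψ) {k : ℕ} {v : Fin (k + 1) → V}
    (hv : Function.Injective v) (hadj : ∀ i, G.Adj u (v i))
    (hcol : ∀ i : Fin k, ψ s(u, v i.succ) ≠ none)
    (hfan : ∀ i : Fin k, ∀ c, ψ s(u, v i.succ) = some c → MissingAt G ψ c (v i.castSucc))
    {x : C} (hxu : MissingAt G ψ x u) (hxk : MissingAt G ψ x (v (Fin.last k))) :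
    ∃ ψ' : Sym2 V → Option C,
      IsProperPartial G ψ' ∧
      (∀ i : Fin k, ψ' s(u, v i.castSucc) = ψ s(u, v i.succ)) ∧
      ψ' s(u, v (Fin.last k)) = some x ∧
      (∀ e, (∀ i, e ≠ s(u, v i)) → ψ' e = ψ e) ∧
      (∀ e, ψ' e ≠ none ↔ (ψ e ≠ none ∨ e = s(u, v 0))) := by
  choose c hc using fun i => Option.ne_none_iff_exists'.mp (hcol i)
  have fan : IsVizingFan G ψ u v c := ⟨hv, hadj, hc, fun i => hfan i (c i) (hc i)⟩
  refine ⟨recolorStar ψ u v (Fin.snoc c x), fan.isProperPartial_rotation hψ hxu hxk,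
    fun i => ?_, ?_, fun e he => recolorStar_of_forall_ne he, fun e => ?_⟩
  · rw [recolorStar_apply hv, Fin.snoc_castSucc, hc]
  · rw [recolorStar_apply hv, Fin.snoc_last]
  · rw [recolorStar_ne_none_iff hv, fan.ne_none_or_exists_iff]

end

/-- **Correctness of the fan-rotation case of Vizing's procedure.** Let `ψ` be a proper
partial `(Δ+1)`-edge coloring of `G` (max degree `≤ Δ`), and let `u` have distinct
neighbors `v 0, v 1, …, v k` with `(u, v 0)` uncolored, `(u, v i)` colored for `1 ≤ i ≤ k`,
`ψ (u, v i) ∈ miss_ψ (v (i-1))` for `1 ≤ i ≤ k`, and some `x ∈ miss_ψ u ∩ miss_ψ (v k)`.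
Then the rotation `ψ' (u, v i) := ψ (u, v (i+1))` for `0 ≤ i < k`, `ψ' (u, v k) := x`,
leaving all other edges unchanged, is a proper partial `(Δ+1)`-edge coloring whose set of
colored edges is that of `ψ` together with the edge `(u, v 0)`. -/
theorem vizing_fan_rotation {V : Type*} [Fintype V] (G : SimpleGraph V)
    [DecidableRel G.Adj] (Δ : ℕ) (hΔ : G.maxDegree ≤ Δ)
    (ψ : Sym2 V → Option (Fin (Δ + 1))) (hψ : IsProperPartial G ψ)
    (u : V) (k : ℕ) (v : Fin (k + 1) → V) (hv : Function.Injective v)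
    (hadj : ∀ i, G.Adj u (v i))
    (h0 : ψ s(u, v 0) = none)
    (hcol : ∀ i : Fin k, ψ s(u, v i.succ) ≠ none)
    (hfan : ∀ i : Fin k, ∀ c, ψ s(u, v i.succ) = some c → MissingAt G ψ c (v i.castSucc))
    (x : Fin (Δ + 1)) (hxu : MissingAt G ψ x u) (hxk : MissingAt G ψ x (v (Fin.last k))) :
    ∃ ψ' : Sym2 V → Option (Fin (Δ + 1)),
      IsProperPartial G ψ' ∧
      (∀ i : Fin k, ψ' s(u, v i.castSucc) = ψ s(u, v i.succ)) ∧
      ψ' s(u, v (Fin.last k)) = some x ∧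
      (∀ e, (∀ i, e ≠ s(u, v i)) → ψ' e = ψ e) ∧
      (∀ e, ψ' e ≠ none ↔ (ψ e ≠ none ∨ e = s(u, v 0))) :=
  vizing_fan_rotation_general hψ hv hadj hcol hfan hxu hxk
end
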